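/- Let α > −1 and n ≥ 1, let a, b ∈ ℂ \ {0} and c ∈ 𝔻, set ψ(z) = a z^n/(n! (1 − conj(c) z)^{n+α+2}) and φ(z) = c + b z/(1 − conj(c) z), assume φ maps 𝔻 into 𝔻 and D_{ψ,φ,n} is bounded on A_α². Then D_{ψ,φ,n} is normal (commutes with its adjoint) if and only if b ∈ ℝ \ {0} or c = 0. -/

import Mathlib

open Complex Metric Set

noncomputable section

/-- The open unit disk in `ℂ`. -/
def unitDisk : Set ℂ := Metric.ball 0 1

/-- `wb2 α j` is `β(j)² = j!·Γ(α+2)/Γ(j+α+2)`, the square of the norm of `z^j` in `A_α²`. -/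
def wb2 (α : ℝ) (j : ℕ) : ℝ :=
  (j.factorial : ℝ) * Real.Gamma (α + 2) / Real.Gamma ((j : ℝ) + α + 2)

/-- The `j`-th Taylor coefficient of `f` at `0`. -/
def tcoeff (f : ℂ → ℂ) (j : ℕ) : ℂ := iteratedDeriv j f 0 / (j.factorial : ℂ)

/-- An abstract model of the weighted Bergman space `A_α²`: a complex Hilbert space `H`
whose elements are (identified with) the analytic functions on the unit disk with
square-summable weighted Taylor coefficients, with the weighted `ℓ²` inner product. -/
structure BergmanModel (α : ℝ) (H : Type) [NormedAddCommGroup H]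
    [InnerProductSpace ℂ H] where
  emb : H →ₗ[ℂ] (ℂ → ℂ)
  analyticOn : ∀ f : H, AnalyticOnNhd ℂ (emb f) unitDisk
  summable_norm : ∀ f : H, Summable (fun j => ‖tcoeff (emb f) j‖ ^ 2 * wb2 α j)
  inj : ∀ f g : H, Set.EqOn (emb f) (emb g) unitDisk → f = g
  exists_rep : ∀ F : ℂ → ℂ, AnalyticOnNhd ℂ F unitDisk →
      Summable (fun j => ‖tcoeff F j‖ ^ 2 * wb2 α j) →
      ∃ f : H, Set.EqOn (emb f) F unitDisk
  inner_eq : ∀ f g : H,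
      (@inner ℂ H _ f g) =
        ∑' j : ℕ, (starRingEnd ℂ) (tcoeff (emb f) j) * tcoeff (emb g) j * (wb2 α j : ℂ)

/-- The derivative-evaluation kernel `K_w^{(m)}(z) = m!·z^m / (β(m)²·(1-conj(w)·z)^(m+α+2))`. -/
def kern (α : ℝ) (m : ℕ) (w z : ℂ) : ℂ :=
  (m.factorial : ℂ) * z ^ m /
    ((wb2 α m : ℂ) * (1 - (starRingEnd ℂ) w * z) ^ ((m : ℂ) + (α : ℂ) + 2))

/-!
Let `K_w` and `K_w^{(n)}` be the kernels reproducing `f w` and `f^{(n)} w`. The adjoint of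
`T = D_{ψ,φ,n}` sends `K_w` to `conj (ψ w) • K_{φ w}^{(n)}`. For the weights and symbols at hand,
conjugating the parameters `a` and `b` exchanges `T` and its adjoint, so `T K_w` is
`conj (ψ' w) • K_{φ' w}^{(n)}`, where `ψ'` and `φ'` have the parameters `conj a` and `conj b`. Hence
`T` is normal iff the Gram matrices of these two families agree.

The inner product of `K_u^{(n)}` and `K_v^{(n)}` is a power series in `u * conj v` with nonnegative
coefficients. If `b` is real then `φ = φ'`, and if `c = 0` then `φ z * conj (φ w)` only depends on
`|b|`, so `T` is normal. Conversely, normality forces `|φ z| = |φ' z|`; at `z = i c` this reads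
`|1 + i (b - |c|²)| = |1 + i (conj b - |c|²)|`, which means that `b` is real.
-/

open scoped ComplexConjugate InnerProductSpace

section PowerSeries

lemma isOpen_unitDisk : IsOpen unitDisk := Metric.isOpen_ball

lemma mem_unitDisk {z : ℂ} : z ∈ unitDisk ↔ ‖z‖ < 1 := mem_ball_zero_iff

lemma zero_mem_unitDisk : (0 : ℂ) ∈ unitDisk := Metric.mem_ball_self one_pos

lemma conj_mem_unitDisk {z : ℂ} (hz : z ∈ unitDisk) : conj z ∈ unitDisk := by
  rwa [mem_unitDisk, RCLike.norm_conj, ← mem_unitDisk]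

lemma conj_mul_mem_unitDisk {w z : ℂ} (hw : w ∈ unitDisk) (hz : z ∈ unitDisk) :
    conj w * z ∈ unitDisk := by
  rw [mem_unitDisk] at *
  rw [norm_mul, RCLike.norm_conj]
  exact mul_lt_one_of_nonneg_of_lt_one_left (norm_nonneg w) hw hz.le

lemma hasSum_nat_add_iff_of_eq_zero {E : Type*} [AddCommGroup E] [TopologicalSpace E]
    [IsTopologicalAddGroup E] {f : ℕ → E} {x : E} {m : ℕ} (hf : ∀ j < m, f j = 0) :
    HasSum (fun k => f (k + m)) x ↔ HasSum f x := by
  rw [← hasSum_nat_add_iff' (f := f) m,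
    Finset.sum_eq_zero fun j hj => hf j (Finset.mem_range.1 hj), sub_zero]

lemma factorial_mul_add_descFactorial (k m : ℕ) :
    k.factorial * (k + m).descFactorial m = (k + m).factorial := by
  rw [Nat.add_descFactorial_eq_ascFactorial, Nat.factorial_mul_ascFactorial]

lemma hasSum_tcoeff {f : ℂ → ℂ} (hf : AnalyticOnNhd ℂ f unitDisk) {z : ℂ} (hz : z ∈ unitDisk) :
    HasSum (fun j => tcoeff f j * z ^ j) (f z) := by
  refine (Complex.hasSum_taylorSeries_on_ball hf.differentiableOn hz).congr_fun fun j => ?_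
  simp only [tcoeff, smul_eq_mul, sub_zero]
  ring

lemma tcoeff_eq_of_hasSum {f : ℂ → ℂ} {a : ℕ → ℂ}
    (h : ∀ z ∈ unitDisk, HasSum (fun j => a j * z ^ j) (f z)) (j : ℕ) : tcoeff f j = a j := by
  have hf : HasFPowerSeriesAt f (FormalMultilinearSeries.ofScalars ℂ a) 0 := by
    rw [hasFPowerSeriesAt_iff]
    filter_upwards [isOpen_unitDisk.mem_nhds zero_mem_unitDisk] with z hz
    simpa [FormalMultilinearSeries.coeff_ofScalars, mul_comm] using h z hz
  have hcoeff := congrArg (FormalMultilinearSeries.coeff · j)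
    (hf.analyticAt.hasFPowerSeriesAt.eq_formalMultilinearSeries hf)
  simpa [FormalMultilinearSeries.coeff_ofScalars, tcoeff] using hcoeff

lemma tcoeff_congr {f g : ℂ → ℂ} (h : EqOn f g unitDisk) (j : ℕ) : tcoeff f j = tcoeff g j := by
  rw [tcoeff, tcoeff, h.iteratedDeriv_of_isOpen isOpen_unitDisk j zero_mem_unitDisk]

lemma hasSum_iteratedDeriv {f : ℂ → ℂ} (hf : AnalyticOnNhd ℂ f unitDisk) (m : ℕ) {z : ℂ}
    (hz : z ∈ unitDisk) :
    HasSum (fun j => tcoeff f j * j.descFactorial m * z ^ (j - m)) (iteratedDeriv m f z) := by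
  rw [← hasSum_nat_add_iff_of_eq_zero (m := m) fun j hj => by
    simp [Nat.descFactorial_of_lt hj]]
  have hderiv : AnalyticOnNhd ℂ (iteratedDeriv m f) unitDisk := by
    rw [iteratedDeriv_eq_iterate]
    exact hf.iterated_deriv m
  refine (hasSum_tcoeff hderiv hz).congr_fun fun k => ?_
  have hiter : iteratedDeriv k (iteratedDeriv m f) = iteratedDeriv (k + m) f := by
    simp only [iteratedDeriv_eq_iterate, Function.iterate_add, Function.comp_apply]
  have hk : (k.factorial : ℂ) ≠ 0 := by exact_mod_cast k.factorial_ne_zero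
  have hkm : ((k + m).factorial : ℂ) ≠ 0 := by exact_mod_cast (k + m).factorial_ne_zero
  have hfact : (k.factorial : ℂ) * (k + m).descFactorial m = (k + m).factorial := by
    exact_mod_cast factorial_mul_add_descFactorial k m
  rw [tcoeff, tcoeff, hiter, Nat.add_sub_cancel]
  field_simp
  linear_combination iteratedDeriv (k + m) f 0 * z ^ k * hfact

end PowerSeries

section Cpow

lemma one_sub_conj_mul_re_pos {w z : ℂ} (hw : w ∈ unitDisk) (hz : z ∈ unitDisk) :
    0 < (1 - conj w * z).re := by
  have h := mem_unitDisk.1 (conj_mul_mem_unitDisk hw hz)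
  rw [sub_re, one_re]
  linarith [re_le_norm (conj w * z)]

lemma one_sub_conj_mul_ne_zero {w z : ℂ} (hw : w ∈ unitDisk) (hz : z ∈ unitDisk) :
    1 - conj w * z ≠ 0 :=
  fun h => (one_sub_conj_mul_re_pos hw hz).ne' (by rw [h, zero_re])

lemma mul_cpow_of_re_pos {x y : ℂ} (hx : 0 < x.re) (hy : 0 < y.re) (s : ℂ) :
    (x * y) ^ s = x ^ s * y ^ s := by
  have hx0 : x ≠ 0 := by rintro rfl; simp at hx
  have hy0 : y ≠ 0 := by rintro rfl; simp at hy
  have hxarg := abs_lt.1 (abs_arg_lt_pi_div_two_iff.2 (Or.inl hx))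
  have hyarg := abs_lt.1 (abs_arg_lt_pi_div_two_iff.2 (Or.inl hy))
  rw [cpow_def_of_ne_zero hx0, cpow_def_of_ne_zero hy0, cpow_def_of_ne_zero (mul_ne_zero hx0 hy0),
    ← Complex.exp_add, Complex.log_mul hx0 hy0 ⟨by linarith, by linarith⟩, add_mul]

lemma conj_cpow_ofReal_of_re_pos {x : ℂ} (hx : 0 < x.re) (s : ℝ) :
    conj (x ^ (s : ℂ)) = conj x ^ (s : ℂ) := by
  have harg := abs_lt.1 (abs_arg_lt_pi_div_two_iff.2 (Or.inl hx))
  rw [conj_cpow _ _ (by linarith [Real.pi_pos]), conj_ofReal]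

lemma ringChoose_add_sub_one_eq_Gamma_div {s : ℝ} (hs : 0 < s) (k : ℕ) :
    Ring.choose ((s : ℂ) + k - 1) k =
      ((Real.Gamma (s + k) / (Real.Gamma s * k.factorial) : ℝ) : ℂ) := by
  have hpole : ∀ j : ℕ, (s : ℂ) ≠ -j := fun j h => by
    have : s = -j := by exact_mod_cast h
    linarith [j.cast_nonneg (α := ℝ)]
  have hpoch := Ring.factorial_nsmul_multichoose_eq_ascPochhammer (s : ℂ) k
  rw [Polynomial.ascPochhammer_smeval_eq_eval, ← Complex.Gamma_add_nat_div_Gamma_eq _ hpole,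
    Ring.multichoose_eq, nsmul_eq_mul] at hpoch
  have hk : (k.factorial : ℂ) ≠ 0 := by exact_mod_cast k.factorial_ne_zero
  push_cast [← Complex.Gamma_ofReal]
  rw [← div_div, ← hpoch, mul_div_cancel_left₀ _ hk]

lemma hasSum_one_div_one_sub_cpow {s : ℝ} (hs : 0 < s) {x : ℂ} (hx : x ∈ unitDisk) :
    HasSum (fun k : ℕ => ((Real.Gamma (s + k) / (Real.Gamma s * k.factorial) : ℝ) : ℂ) * x ^ k)
      (1 / (1 - x) ^ (s : ℂ)) := by
  have h := (one_div_one_sub_cpow_hasFPowerSeriesOnBall_zero s).hasSum (y := x)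
    (by rwa [← ENNReal.coe_one, Metric.eball_coe])
  rw [zero_add] at h
  refine h.congr_fun fun k => ?_
  rw [← ringChoose_add_sub_one_eq_Gamma_div hs, FormalMultilinearSeries.ofScalars_apply_eq,
    smul_eq_mul]

end Cpow

section Kernel

variable {α : ℝ}

lemma wb2_pos (hα : -2 < α) (j : ℕ) : 0 < wb2 α j := by
  have : (0 : ℝ) ≤ j := j.cast_nonneg
  have := Real.Gamma_pos_of_pos (show 0 < α + 2 by linarith)
  have := Real.Gamma_pos_of_pos (show 0 < j + α + 2 by linarith)
  unfold wb2
  positivity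

lemma wb2_ne_zero (hα : -2 < α) (j : ℕ) : (wb2 α j : ℂ) ≠ 0 :=
  ofReal_ne_zero.2 (wb2_pos hα j).ne'

lemma analyticOnNhd_kern (hα : -2 < α) (m : ℕ) {w : ℂ} (hw : w ∈ unitDisk) :
    AnalyticOnNhd ℂ (kern α m w) unitDisk := fun z hz => by
  have hre := one_sub_conj_mul_re_pos hw hz
  have hbase : AnalyticAt ℂ (fun z => 1 - conj w * z) z := by fun_prop
  refine AnalyticAt.div (by fun_prop)
    (analyticAt_const.mul (hbase.cpow analyticAt_const (Or.inl hre))) ?_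
  exact mul_ne_zero (wb2_ne_zero hα m) fun h =>
    one_sub_conj_mul_ne_zero hw hz ((cpow_eq_zero_iff _ _).1 h).1

lemma factorial_div_wb2_mul_Gamma_div (hα : -2 < α) (m k : ℕ) :
    m.factorial / wb2 α m *
        (Real.Gamma (m + α + 2 + k) / (Real.Gamma (m + α + 2) * k.factorial)) =
      (k + m).descFactorial m / wb2 α (k + m) := by
  have : (0 : ℝ) ≤ m := m.cast_nonneg
  have : (0 : ℝ) ≤ k := k.cast_nonneg
  have := (Real.Gamma_pos_of_pos (show 0 < α + 2 by linarith)).ne'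
  have := (Real.Gamma_pos_of_pos (show 0 < m + α + 2 by linarith)).ne'
  have := (Real.Gamma_pos_of_pos (show 0 < m + α + 2 + k by linarith)).ne'
  have hfact : (k.factorial : ℝ) * (k + m).descFactorial m = (k + m).factorial := by
    exact_mod_cast factorial_mul_add_descFactorial k m
  have := m.factorial_ne_zero
  have := k.factorial_ne_zero
  have := (k + m).factorial_ne_zero
  unfold wb2
  rw [show ((k + m : ℕ) : ℝ) + α + 2 = m + α + 2 + k by push_cast; ring]
  field_simp
  rw [← hfact]

lemma hasSum_kern (hα : -2 < α) (m : ℕ) {w z : ℂ} (hw : w ∈ unitDisk) (hz : z ∈ unitDisk) :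
    HasSum (fun j => conj w ^ (j - m) * (j.descFactorial m / wb2 α j) * z ^ j)
      (kern α m w z) := by
  rw [← hasSum_nat_add_iff_of_eq_zero (m := m) fun j hj => by
    simp [Nat.descFactorial_of_lt hj]]
  have hs : 0 < m + α + 2 := by linarith [m.cast_nonneg (α := ℝ)]
  have hbinom := (hasSum_one_div_one_sub_cpow hs (conj_mul_mem_unitDisk hw hz)).mul_left
    (m.factorial / wb2 α m * z ^ m : ℂ)
  rw [show kern α m w z = m.factorial / wb2 α m * z ^ m *
      (1 / (1 - conj w * z) ^ ((m + α + 2 : ℝ) : ℂ)) by push_cast [kern]; ring]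
  refine hbinom.congr_fun fun k => ?_
  have hcoeff := congrArg (ofReal : ℝ → ℂ) (factorial_div_wb2_mul_Gamma_div hα m k)
  simp only [ofReal_mul, ofReal_div, ofReal_natCast] at hcoeff ⊢
  rw [Nat.add_sub_cancel, ← hcoeff]
  ring

lemma tcoeff_kern (hα : -2 < α) (m : ℕ) {w : ℂ} (hw : w ∈ unitDisk) (j : ℕ) :
    tcoeff (kern α m w) j = conj w ^ (j - m) * (j.descFactorial m / wb2 α j) :=
  tcoeff_eq_of_hasSum (fun _ hz => hasSum_kern hα m hw hz) j

lemma hasSum_iteratedDeriv_kern (hα : -2 < α) (m : ℕ) {u v : ℂ} (hu : u ∈ unitDisk)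
    (hv : v ∈ unitDisk) :
    HasSum (fun j => (((j.descFactorial m : ℝ) ^ 2 / wb2 α j : ℝ) : ℂ) * (u * conj v) ^ (j - m))
      (iteratedDeriv m (kern α m v) u) := by
  refine (hasSum_iteratedDeriv (analyticOnNhd_kern hα m hv) m hu).congr_fun fun j => ?_
  rw [tcoeff_kern hα m hv, mul_pow]
  push_cast
  ring

lemma summable_sq_norm_tcoeff_kern (hα : -2 < α) (m : ℕ) {w : ℂ} (hw : w ∈ unitDisk) :
    Summable fun j => ‖tcoeff (kern α m w) j‖ ^ 2 * wb2 α j := by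
  refine Complex.summable_ofReal.1
    ((hasSum_iteratedDeriv_kern hα m hw hw).summable.congr fun j => ?_)
  have hwb := wb2_ne_zero hα j
  rw [tcoeff_kern hα m hw, mul_conj', norm_mul, norm_pow, RCLike.norm_conj, norm_div, norm_natCast,
    Complex.norm_of_nonneg (wb2_pos hα j).le]
  push_cast
  field_simp
  ring

lemma conj_kern (m : ℕ) {w z : ℂ} (hw : w ∈ unitDisk) (hz : z ∈ unitDisk) :
    conj (kern α m w z) = kern α m (conj w) (conj z) := by
  have h := conj_cpow_ofReal_of_re_pos (one_sub_conj_mul_re_pos hw hz) (m + α + 2)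
  push_cast at h
  simp [kern, h]

end Kernel

namespace BergmanModel

variable {α : ℝ} {H : Type} [NormedAddCommGroup H] [InnerProductSpace ℂ H]

lemma exists_kernel (M : BergmanModel α H) (hα : -2 < α) (m : ℕ) (w : unitDisk) :
    ∃ k : H, EqOn (M.emb k) (kern α m w) unitDisk ∧
      ∀ f : H, ⟪k, f⟫_ℂ = iteratedDeriv m (M.emb f) w := by
  obtain ⟨k, hk⟩ := M.exists_rep (kern α m w) (analyticOnNhd_kern hα m w.2)
    (summable_sq_norm_tcoeff_kern hα m w.2)
  refine ⟨k, hk, fun f => ?_⟩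
  rw [M.inner_eq]
  refine ((hasSum_iteratedDeriv (M.analyticOn f) m w.2).congr_fun fun j => ?_).tsum_eq
  have hwb := wb2_ne_zero hα j
  rw [tcoeff_congr hk, tcoeff_kern hα m w.2]
  simp only [map_mul, map_pow, map_div₀, conj_conj, conj_ofReal, map_natCast]
  field_simp

/-- The kernel `K_w^{(m)}` as an element of the model: it represents the functional
`f ↦ f^{(m)} w`. -/
def kernel (M : BergmanModel α H) (hα : -2 < α) (m : ℕ) (w : unitDisk) : H :=
  (M.exists_kernel hα m w).choose

variable (M : BergmanModel α H) (hα : -2 < α)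

lemma emb_kernel (m : ℕ) (w : unitDisk) : EqOn (M.emb (M.kernel hα m w)) (kern α m w) unitDisk :=
  (M.exists_kernel hα m w).choose_spec.1

lemma inner_kernel_left (m : ℕ) (w : unitDisk) (f : H) :
    ⟪M.kernel hα m w, f⟫_ℂ = iteratedDeriv m (M.emb f) w :=
  (M.exists_kernel hα m w).choose_spec.2 f

lemma inner_kernel_zero_left (w : unitDisk) (f : H) : ⟪M.kernel hα 0 w, f⟫_ℂ = M.emb f w := by
  rw [inner_kernel_left, iteratedDeriv_zero]

lemma ext_inner_kernel {f g : H}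
    (h : ∀ w, ⟪M.kernel hα 0 w, f⟫_ℂ = ⟪M.kernel hα 0 w, g⟫_ℂ) : f = g :=
  M.inj f g fun w hw => by simpa only [inner_kernel_zero_left] using h ⟨w, hw⟩

lemma hasSum_inner_kernel (m : ℕ) (u v : unitDisk) :
    HasSum (fun j =>
        (((j.descFactorial m : ℝ) ^ 2 / wb2 α j : ℝ) : ℂ) * (u * conj (v : ℂ)) ^ (j - m))
      ⟪M.kernel hα m u, M.kernel hα m v⟫_ℂ := by
  rw [inner_kernel_left, (M.emb_kernel hα m v).iteratedDeriv_of_isOpen isOpen_unitDisk m u.2]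
  exact hasSum_iteratedDeriv_kern hα m u.2 v.2

lemma inner_kernel_congr (m : ℕ) {u v u' v' : unitDisk}
    (h : (u : ℂ) * conj (v : ℂ) = u' * conj (v' : ℂ)) :
    ⟪M.kernel hα m u, M.kernel hα m v⟫_ℂ = ⟪M.kernel hα m u', M.kernel hα m v'⟫_ℂ :=
  (M.hasSum_inner_kernel hα m u v).unique (h ▸ M.hasSum_inner_kernel hα m u' v')

lemma hasSum_norm_sq_kernel (m : ℕ) (u : unitDisk) :
    HasSum (fun j => (j.descFactorial m : ℝ) ^ 2 / wb2 α j * (‖(u : ℂ)‖ ^ 2) ^ (j - m))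
      (‖M.kernel hα m u‖ ^ 2) := by
  have h := M.hasSum_inner_kernel hα m u u
  rw [inner_self_eq_norm_sq_to_K, mul_conj'] at h
  refine Complex.hasSum_ofReal.1 ?_
  push_cast at h ⊢
  exact h

lemma norm_kernel_lt_norm_kernel (m : ℕ) {u v : unitDisk} (h : ‖(u : ℂ)‖ < ‖(v : ℂ)‖) :
    ‖M.kernel hα m u‖ < ‖M.kernel hα m v‖ := by
  have hwb := wb2_pos hα
  refine lt_of_pow_lt_pow_left₀ 2 (norm_nonneg _) (hasSum_lt (i := m + 1) (fun j => ?_) ?_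
    (M.hasSum_norm_sq_kernel hα m u) (M.hasSum_norm_sq_kernel hα m v))
  · have := hwb j
    beta_reduce
    gcongr
  · have := hwb (m + 1)
    have : 0 < (m + 1).descFactorial m := Nat.descFactorial_pos.2 m.le_succ
    simp only [Nat.add_sub_cancel_left, pow_one]
    gcongr

lemma norm_eq_of_norm_kernel_eq (m : ℕ) {u v : unitDisk}
    (h : ‖M.kernel hα m u‖ = ‖M.kernel hα m v‖) : ‖(u : ℂ)‖ = ‖(v : ℂ)‖ := by
  by_contra hne
  rcases lt_or_gt_of_ne hne with hlt | hlt
  · exact (M.norm_kernel_lt_norm_kernel hα m hlt).ne h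
  · exact (M.norm_kernel_lt_norm_kernel hα m hlt).ne' h

/-- `T` is the weighted composition–differentiation operator `D_{ψ,φ,n}`. -/
def IsCompDiff (ψ φ : ℂ → ℂ) (n : ℕ) (T : H →L[ℂ] H) : Prop :=
  ∀ f : H, ∀ z ∈ unitDisk, M.emb (T f) z = ψ z * iteratedDeriv n (M.emb f) (φ z)

variable {M} in
lemma IsCompDiff.emb_apply_kernel {ψ φ : ℂ → ℂ} {n : ℕ} {T : H →L[ℂ] H}
    (hT : M.IsCompDiff ψ φ n T) (hφ : MapsTo φ unitDisk unitDisk) (w : unitDisk) {z : ℂ}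
    (hz : z ∈ unitDisk) :
    M.emb (T (M.kernel hα 0 w)) z = ψ z * conj (kern α n (φ z) w) := by
  rw [hT _ z hz, ← M.inner_kernel_left hα n ⟨φ z, hφ hz⟩, ← inner_conj_symm,
    inner_kernel_zero_left, M.emb_kernel hα n _ w.2]

section Operators

open ContinuousLinearMap

variable [CompleteSpace H]

lemma clm_ext_kernel {S T : H →L[ℂ] H}
    (h : ∀ w, S (M.kernel hα 0 w) = T (M.kernel hα 0 w)) : S = T := by
  refine adjoint.injective (ContinuousLinearMap.ext fun f => M.ext_inner_kernel hα fun w => ?_)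
  rw [adjoint_inner_right, adjoint_inner_right, h]

lemma isStarNormal_of_inner_kernel {T : H →L[ℂ] H}
    (h : ∀ z w, ⟪T (M.kernel hα 0 z), T (M.kernel hα 0 w)⟫_ℂ =
      ⟪adjoint T (M.kernel hα 0 z), adjoint T (M.kernel hα 0 w)⟫_ℂ) : IsStarNormal T := by
  refine ⟨M.clm_ext_kernel hα fun w => M.ext_inner_kernel hα fun z => ?_⟩
  rw [star_eq_adjoint, mul_apply_eq_comp, mul_apply_eq_comp, adjoint_inner_right, h,
    adjoint_inner_left]

variable {M} in
lemma IsCompDiff.adjoint_kernel {ψ φ : ℂ → ℂ} {n : ℕ} {T : H →L[ℂ] H}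
    (hT : M.IsCompDiff ψ φ n T) (hφ : MapsTo φ unitDisk unitDisk) (w : unitDisk) :
    adjoint T (M.kernel hα 0 w) = conj (ψ w) • M.kernel hα n ⟨φ w, hφ w.2⟩ := by
  refine ext_inner_right ℂ fun f => ?_
  rw [adjoint_inner_left, inner_kernel_zero_left, inner_smul_left, inner_kernel_left, hT f w w.2,
    conj_conj]

end Operators

end BergmanModel

section Symbol

/-- The symbol `φ z = c + b z / (1 - conj c z)`. -/
def compDiffSymbol (b c z : ℂ) : ℂ := c + b * z / (1 - conj c * z)

/-- The weight `ψ z = a z ^ n / (n! (1 - conj c z) ^ (n + α + 2))`. -/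
def compDiffWeight (α : ℝ) (n : ℕ) (a c z : ℂ) : ℂ :=
  a * z ^ n / (n.factorial * (1 - conj c * z) ^ ((n : ℂ) + α + 2))

lemma compDiffSymbol_zero_right (b z : ℂ) : compDiffSymbol b 0 z = b * z := by
  simp [compDiffSymbol]

lemma conj_compDiffSymbol (b c z : ℂ) :
    conj (compDiffSymbol b c z) = compDiffSymbol (conj b) (conj c) (conj z) := by
  simp [compDiffSymbol]

lemma compDiffSymbol_rotate {u : ℂ} (hu : ‖u‖ = 1) (b c z : ℂ) :
    compDiffSymbol b (u * c) (u * z) = u * compDiffSymbol b c z := by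
  have hunit : conj u * u = 1 := by simp [conj_mul', hu]
  have hrot : conj (u * c) * (u * z) = conj c * z := by
    rw [map_mul]
    linear_combination conj c * z * hunit
  simp only [compDiffSymbol, hrot]
  ring

lemma exists_norm_eq_one_mul_conj_eq (c : ℂ) : ∃ u : ℂ, ‖u‖ = 1 ∧ u * conj c = c := by
  rcases eq_or_ne c 0 with rfl | hc
  · exact ⟨1, by simp⟩
  · have hconj : conj c ≠ 0 := (map_ne_zero _).2 hc
    exact ⟨c / conj c, by simp [hc], div_mul_cancel₀ c hconj⟩

-- The symbol with parameter `conj b` is conjugate to the original one by an isometric reflection.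
lemma mapsTo_compDiffSymbol_conj {b c : ℂ} (h : MapsTo (compDiffSymbol b c) unitDisk unitDisk) :
    MapsTo (compDiffSymbol (conj b) c) unitDisk unitDisk := fun z hz => by
  obtain ⟨u, hu, huc⟩ := exists_norm_eq_one_mul_conj_eq c
  have huz : u * conj z ∈ unitDisk := by simpa [mem_unitDisk, hu] using hz
  have hreflect : compDiffSymbol (conj b) c z = u * conj (compDiffSymbol b c (u * conj z)) := by
    rw [conj_compDiffSymbol, ← compDiffSymbol_rotate hu, huc, map_mul, conj_conj, ← mul_assoc,
      mul_conj', hu]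
    simp
  simpa [hreflect, mem_unitDisk, hu] using h huz

lemma compDiffSymbol_I_mul_self {c : ℂ} (hc : c ∈ unitDisk) (b : ℂ) :
    compDiffSymbol b c (I * c) =
      c / (1 - conj c * (I * c)) * (1 + I * (b - (‖c‖ ^ 2 : ℝ))) := by
  have hIc : I * c ∈ unitDisk := by simpa [mem_unitDisk] using hc
  have hden := one_sub_conj_mul_ne_zero hc hIc
  rw [compDiffSymbol, ofReal_pow, ← conj_mul', div_mul_eq_mul_div, eq_div_iff hden, add_mul,
    div_mul_cancel₀ _ hden]
  ring

lemma norm_one_add_I_mul_sub_sq (x : ℂ) (r : ℝ) :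
    ‖1 + I * (x - r)‖ ^ 2 = (1 - x.im) ^ 2 + (x.re - r) ^ 2 := by
  rw [← normSq_eq_norm_sq, normSq_apply]
  simp only [add_re, one_re, mul_re, I_re, I_im, sub_re, sub_im, ofReal_re, ofReal_im, add_im,
    one_im, mul_im]
  ring

lemma conj_eq_of_norm_compDiffSymbol_I_mul_self_eq {b c : ℂ} (hc : c ∈ unitDisk) (hc0 : c ≠ 0)
    (h : ‖compDiffSymbol b c (I * c)‖ = ‖compDiffSymbol (conj b) c (I * c)‖) : conj b = b := by
  have hIc : I * c ∈ unitDisk := by simpa [mem_unitDisk] using hc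
  have hfactor : ‖c / (1 - conj c * (I * c))‖ ≠ 0 :=
    norm_ne_zero_iff.2 (div_ne_zero hc0 (one_sub_conj_mul_ne_zero hc hIc))
  rw [compDiffSymbol_I_mul_self hc, compDiffSymbol_I_mul_self hc, norm_mul, norm_mul,
    mul_right_inj' hfactor, ← sq_eq_sq₀ (norm_nonneg _) (norm_nonneg _),
    norm_one_add_I_mul_sub_sq, norm_one_add_I_mul_sub_sq, conj_re, conj_im] at h
  exact conj_eq_iff_im.2 (by linarith)

lemma norm_compDiffWeight_conj (α : ℝ) (n : ℕ) (a c z : ℂ) :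
    ‖compDiffWeight α n (conj a) c z‖ = ‖compDiffWeight α n a c z‖ := by
  simp [compDiffWeight]

lemma compDiffWeight_ne_zero (α : ℝ) (n : ℕ) {a c z : ℂ} (ha : a ≠ 0) (hz0 : z ≠ 0)
    (hc : c ∈ unitDisk) (hz : z ∈ unitDisk) : compDiffWeight α n a c z ≠ 0 := by
  simp [compDiffWeight, ha, hz0, n.factorial_ne_zero, cpow_eq_zero_iff,
    one_sub_conj_mul_ne_zero hc hz]

lemma conj_compDiffWeight (α : ℝ) (n : ℕ) (a : ℂ) {c z : ℂ} (hc : c ∈ unitDisk)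
    (hz : z ∈ unitDisk) :
    conj (compDiffWeight α n a c z) = compDiffWeight α n (conj a) (conj c) (conj z) := by
  have h := conj_cpow_ofReal_of_re_pos (one_sub_conj_mul_re_pos hc hz) (n + α + 2)
  push_cast at h
  simp [compDiffWeight, h]

lemma compDiffWeight_conj_mul_conj (α : ℝ) (n : ℕ) (a c z w : ℂ) :
    compDiffWeight α n (conj a) c z * conj (compDiffWeight α n (conj a) c w) =
      compDiffWeight α n a c z * conj (compDiffWeight α n a c w) := by
  simp only [compDiffWeight, map_div₀, map_mul, map_pow, conj_conj]
  ring

lemma one_sub_conj_mul_one_sub_compDiffSymbol_mul (b : ℂ) {c w z : ℂ} (hc : c ∈ unitDisk)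
    (hw : w ∈ unitDisk) (hz : z ∈ unitDisk) :
    (1 - conj c * z) * (1 - compDiffSymbol b c z * conj w) =
      (1 - c * conj w) * (1 - conj (compDiffSymbol (conj b) c w) * z) := by
  have hcz := one_sub_conj_mul_ne_zero hc hz
  have hcw := one_sub_conj_mul_ne_zero (conj_mem_unitDisk hc) (conj_mem_unitDisk hw)
  rw [conj_compDiffSymbol]
  simp only [compDiffSymbol, conj_conj] at hcw ⊢
  field_simp
  ring

lemma compDiffWeight_mul_conj_kern {α : ℝ} (n : ℕ) (a : ℂ) {b c w z : ℂ} (hc : c ∈ unitDisk)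
    (hφ : MapsTo (compDiffSymbol b c) unitDisk unitDisk) (hw : w ∈ unitDisk) (hz : z ∈ unitDisk) :
    compDiffWeight α n a c z * conj (kern α n (compDiffSymbol b c z) w) =
      conj (compDiffWeight α n (conj a) c w) * kern α n (compDiffSymbol (conj b) c w) z := by
  have hc' := conj_mem_unitDisk hc
  have hw' := conj_mem_unitDisk hw
  have hcpow := congrArg (· ^ ((n : ℂ) + α + 2))
    (one_sub_conj_mul_one_sub_compDiffSymbol_mul b hc hw hz)
  have hφz := one_sub_conj_mul_re_pos (conj_mem_unitDisk (hφ hz)) hw'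
  have hcw := one_sub_conj_mul_re_pos hc' hw'
  rw [conj_conj] at hφz hcw
  simp only [mul_cpow_of_re_pos (one_sub_conj_mul_re_pos hc hz) hφz,
    mul_cpow_of_re_pos hcw (one_sub_conj_mul_re_pos (mapsTo_compDiffSymbol_conj hφ hw) hz)] at hcpow
  rw [conj_kern n (hφ hz) hw, conj_compDiffWeight α n _ hc hw]
  simp only [compDiffWeight, kern, conj_conj, div_mul_div_comm]
  congr 1
  · ring
  · linear_combination (n.factorial * wb2 α n : ℂ) * hcpow

end Symbol

namespace BergmanModel

open ContinuousLinearMap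

variable {α : ℝ} {H : Type} [NormedAddCommGroup H] [InnerProductSpace ℂ H]
  {M : BergmanModel α H} {n : ℕ} {a b c : ℂ} {T : H →L[ℂ] H}

lemma IsCompDiff.apply_kernel (hα : -2 < α)
    (hT : M.IsCompDiff (compDiffWeight α n a c) (compDiffSymbol b c) n T) (hc : c ∈ unitDisk)
    (hφ : MapsTo (compDiffSymbol b c) unitDisk unitDisk) (w : unitDisk) :
    T (M.kernel hα 0 w) = conj (compDiffWeight α n (conj a) c w) •
      M.kernel hα n ⟨compDiffSymbol (conj b) c w, mapsTo_compDiffSymbol_conj hφ w.2⟩ := by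
  refine M.inj _ _ fun z hz => ?_
  rw [hT.emb_apply_kernel hα hφ w hz, compDiffWeight_mul_conj_kern n a hc hφ w.2 hz, map_smul,
    Pi.smul_apply, smul_eq_mul, M.emb_kernel hα n _ hz]

variable [CompleteSpace H]

lemma IsCompDiff.isStarNormal (hα : -2 < α)
    (hT : M.IsCompDiff (compDiffWeight α n a c) (compDiffSymbol b c) n T) (hc : c ∈ unitDisk)
    (hφ : MapsTo (compDiffSymbol b c) unitDisk unitDisk)
    (h : ∀ z w, compDiffSymbol (conj b) c z * conj (compDiffSymbol (conj b) c w) =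
      compDiffSymbol b c z * conj (compDiffSymbol b c w)) : IsStarNormal T := by
  refine M.isStarNormal_of_inner_kernel hα fun z w => ?_
  have hkernel := M.inner_kernel_congr hα n
    (u := ⟨_, mapsTo_compDiffSymbol_conj hφ z.2⟩) (v := ⟨_, mapsTo_compDiffSymbol_conj hφ w.2⟩)
    (u' := ⟨_, hφ z.2⟩) (v' := ⟨_, hφ w.2⟩) (h z w)
  simp only [hT.apply_kernel hα hc hφ, hT.adjoint_kernel hα hφ, inner_smul_left, inner_smul_right,
    conj_conj, ← mul_assoc]
  rw [hkernel, mul_comm (conj _), compDiffWeight_conj_mul_conj, mul_comm (conj _)]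

lemma IsCompDiff.conj_eq_of_isStarNormal (hα : -2 < α)
    (hT : M.IsCompDiff (compDiffWeight α n a c) (compDiffSymbol b c) n T) (hc : c ∈ unitDisk)
    (hφ : MapsTo (compDiffSymbol b c) unitDisk unitDisk) (ha : a ≠ 0) (hc0 : c ≠ 0)
    (hN : IsStarNormal T) : conj b = b := by
  have hIc : I * c ∈ unitDisk := by simpa [mem_unitDisk] using hc
  have hweight := compDiffWeight_ne_zero α n ha (mul_ne_zero I_ne_zero hc0) hc hIc
  have hnorm := isStarNormal_iff_norm_eq_adjoint.1 hN (M.kernel hα 0 ⟨I * c, hIc⟩)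
  rw [hT.apply_kernel hα hc hφ, hT.adjoint_kernel hα hφ, norm_smul, norm_smul, RCLike.norm_conj,
    RCLike.norm_conj, norm_compDiffWeight_conj,
    mul_right_inj' (norm_ne_zero_iff.2 hweight)] at hnorm
  exact conj_eq_of_norm_compDiffSymbol_I_mul_self_eq hc hc0
    (M.norm_eq_of_norm_kernel_eq hα n hnorm).symm

lemma IsCompDiff.isStarNormal_iff (hα : -2 < α)
    (hT : M.IsCompDiff (compDiffWeight α n a c) (compDiffSymbol b c) n T) (hc : c ∈ unitDisk)
    (hφ : MapsTo (compDiffSymbol b c) unitDisk unitDisk) (ha : a ≠ 0) :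
    IsStarNormal T ↔ conj b = b ∨ c = 0 := by
  refine ⟨fun hN => or_iff_not_imp_right.2 fun hc0 =>
    hT.conj_eq_of_isStarNormal hα hc hφ ha hc0 hN, fun h => ?_⟩
  refine hT.isStarNormal hα hc hφ fun z w => ?_
  rcases h with hb | rfl
  · rw [hb]
  · simp only [compDiffSymbol_zero_right, map_mul, conj_conj]
    ring

end BergmanModel

theorem stmt_15_general (α : ℝ) (hα : -2 < α) (n : ℕ)
    (H : Type) [NormedAddCommGroup H] [InnerProductSpace ℂ H] [CompleteSpace H]
    (M : BergmanModel α H)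
    (a b c : ℂ) (ha : a ≠ 0) (hc : c ∈ unitDisk)
    (ψ φ : ℂ → ℂ)
    (hψ : ∀ z ∈ unitDisk, ψ z = a * z ^ n /
      ((n.factorial : ℂ) * (1 - conj c * z) ^ ((n : ℂ) + (α : ℂ) + 2)))
    (hφ : ∀ z ∈ unitDisk, φ z = c + b * z / (1 - conj c * z))
    (hφm : ∀ z ∈ unitDisk, φ z ∈ unitDisk)
    (T : H →L[ℂ] H)
    (hT : ∀ f : H, ∀ z ∈ unitDisk,
      M.emb (T f) z = ψ z * iteratedDeriv n (M.emb f) (φ z)) :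
    T.comp (ContinuousLinearMap.adjoint T) = (ContinuousLinearMap.adjoint T).comp T ↔
      ((∃ r : ℝ, b = (r : ℂ)) ∨ c = 0) := by
  have hmaps : MapsTo (compDiffSymbol b c) unitDisk unitDisk := MapsTo.congr hφm hφ
  have hcomp : M.IsCompDiff (compDiffWeight α n a c) (compDiffSymbol b c) n T := fun f z hz => by
    rw [hT f z hz, hψ z hz, hφ z hz, compDiffWeight, compDiffSymbol]
  have hnormal : T.comp (ContinuousLinearMap.adjoint T) = (ContinuousLinearMap.adjoint T).comp T ↔
      IsStarNormal T := eq_comm.trans (isStarNormal_iff T).symm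
  rw [hnormal, hcomp.isStarNormal_iff hα hc hmaps ha, conj_eq_iff_real]

/-- For `ψ(z) = a z^n/(n!(1-conj(c)z)^{n+α+2})` and
`φ(z) = c + bz/(1-conj(c)z)` with `a, b ≠ 0`, `c ∈ 𝔻`, `φ` a self-map of `𝔻` and
`D_{ψ,φ,n}` bounded on `A_α²`, the operator `D_{ψ,φ,n}` is normal iff `b ∈ ℝ \ {0}`
or `c = 0`. -/
theorem stmt_15 (α : ℝ) (hα : -1 < α) (n : ℕ) (hn : 1 ≤ n)
    (H : Type) [NormedAddCommGroup H] [InnerProductSpace ℂ H] [CompleteSpace H]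
    (M : BergmanModel α H)
    (a b c : ℂ) (ha : a ≠ 0) (hb : b ≠ 0) (hc : c ∈ unitDisk)
    (ψ φ : ℂ → ℂ)
    (hψ : ∀ z ∈ unitDisk, ψ z = a * z ^ n /
      ((n.factorial : ℂ) * (1 - (starRingEnd ℂ) c * z) ^ ((n : ℂ) + (α : ℂ) + 2)))
    (hφ : ∀ z ∈ unitDisk, φ z = c + b * z / (1 - (starRingEnd ℂ) c * z))
    (hφm : ∀ z ∈ unitDisk, φ z ∈ unitDisk)
    (T : H →L[ℂ] H)
    (hT : ∀ f : H, ∀ z ∈ unitDisk,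
      M.emb (T f) z = ψ z * iteratedDeriv n (M.emb f) (φ z)) :
    T.comp (ContinuousLinearMap.adjoint T) = (ContinuousLinearMap.adjoint T).comp T ↔
      ((∃ r : ℝ, r ≠ 0 ∧ b = (r : ℂ)) ∨ c = 0) := by
  have hreal : (∃ r : ℝ, b = r) ↔ ∃ r : ℝ, r ≠ 0 ∧ b = r :=
    exists_congr fun r => ⟨fun h => ⟨by rintro rfl; exact hb (h.trans ofReal_zero), h⟩, And.right⟩
  exact (stmt_15_general α (by linarith) n H M a b c ha hc ψ φ hψ hφ hφm T hT).trans
    (or_congr_left hreal)
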